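/- Let n be a positive integer, let ω be the standard symplectic form on ℝ^{2n}, let L ⊆ ℝ^{2n} be the span of the first n standard basis vectors, and let P be the Siegel parabolic subgroup of Sp_{2n}(ℝ). Let W and W' be n-dimensional subspaces of ℝ^{2n}. Then there exists h ∈ P whose associated linear map carries W onto W' if and only if the following three equalities of dimensions hold: finrank(L ⊓ W ⊓ W^⊥) = finrank(L ⊓ W' ⊓ W'^⊥), finrank(W ⊓ W^⊥) = finrank(W' ⊓ W'^⊥), and finrank(L ⊓ W) = finrank(L ⊓ W'). -/

import Mathlib

open Matrix

/-- The standard symplectic matrix `J = fromBlocks 0 I_n (-I_n) 0` on `ℝ^{2n}`,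
with `ℝ^{2n}` realized as `Fin n ⊕ Fin n → ℝ`. -/
def Jmat (n : ℕ) : Matrix (Fin n ⊕ Fin n) (Fin n ⊕ Fin n) ℝ :=
  Matrix.fromBlocks 0 1 (-1) 0

/-- The standard symplectic form `ω(u,v) = uᵀ J v` on `ℝ^{2n}`. -/
def omegaForm (n : ℕ) (u v : Fin n ⊕ Fin n → ℝ) : ℝ :=
  u ⬝ᵥ (Jmat n) *ᵥ v

/-- The ω-orthogonal complement `W^⊥ = {v | ∀ w ∈ W, ω(v,w) = 0}` of a subspace `W`. -/
def sympPerp (n : ℕ) (W : Submodule ℝ (Fin n ⊕ Fin n → ℝ)) :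
    Submodule ℝ (Fin n ⊕ Fin n → ℝ) where
  carrier := {v | ∀ w ∈ W, omegaForm n v w = 0}
  zero_mem' := fun w _ => by simp [omegaForm]
  add_mem' := fun {a b} ha hb w hw => by
    have h1 := ha w hw
    have h2 := hb w hw
    simp only [omegaForm, add_dotProduct] at *
    rw [h1, h2, add_zero]
  smul_mem' := fun c a ha w hw => by
    have h1 := ha w hw
    simp only [omegaForm, smul_dotProduct, smul_eq_mul] at *
    rw [h1, mul_zero]

/-- `L`: the span of the first `n` standard basis vectors of `ℝ^{2n}`. -/
def Lsub (n : ℕ) : Submodule ℝ (Fin n ⊕ Fin n → ℝ) :=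
  Submodule.span ℝ (Set.range fun i : Fin n => Pi.single (Sum.inl i) (1 : ℝ))

/-!
Suppose `W` and `W'` have the same invariants. As long as one of `W ⊓ W^⊥`, `L ⊓ W`, `L ⊓ W^⊥` is
nonzero, there is a hyperbolic pair `e, f` with `e ∈ L` such that `L` and `W` both split along the
plane spanned by `e` and `f`. There are four kinds of such pairs, according to which of `e`, `f` lie
in `W`, and the invariants detect which kinds exist. Hence a pair of the same kind exists for `W'`,
and since passing to the complements of the two planes changes the invariants on both sides by the
same amounts, induction on the dimension applies. In the remaining case `W` is symplectic, the space
is `L ⊕ W`, and the form pairs `L` perfectly with `W`: an isometry from `W` onto `W'` exists because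
the dimensions agree, and it extends to `L` by duality.
-/

open Module LinearMap.BilinForm
open LinearMap (BilinForm)

section Orthogonal

variable {K V V' : Type*} [Field K] [AddCommGroup V] [Module K V] [AddCommGroup V'] [Module K V']
  {B : BilinForm K V} {B' : BilinForm K V'} {L X Y : Submodule K V} {X' Y' : Submodule K V'}

lemma eq_bot_iff_of_finrank_eq [FiniteDimensional K V] [FiniteDimensional K V']
    (h : finrank K X = finrank K X') : X = ⊥ ↔ X' = ⊥ := by
  rw [← Submodule.finrank_eq_zero, h, Submodule.finrank_eq_zero]

lemma le_iff_finrank_inf_eq [FiniteDimensional K V] : X ≤ Y ↔ finrank K ↥(X ⊓ Y) = finrank K X :=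
  ⟨fun h => by rw [inf_eq_left.2 h],
    fun h => inf_eq_left.1 (Submodule.eq_of_le_of_finrank_eq inf_le_left h)⟩

lemma le_iff_le_of_finrank_eq [FiniteDimensional K V] [FiniteDimensional K V']
    (h : finrank K X = finrank K X') (hinf : finrank K ↥(X ⊓ Y) = finrank K ↥(X' ⊓ Y')) :
    X ≤ Y ↔ X' ≤ Y' := by
  rw [le_iff_finrank_inf_eq, le_iff_finrank_inf_eq, h, hinf]

lemma orthogonal_sup (B : BilinForm K V) (X Y : Submodule K V) :
    B.orthogonal (X ⊔ Y) = B.orthogonal X ⊓ B.orthogonal Y := by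
  refine le_antisymm (le_inf (orthogonal_le le_sup_left) (orthogonal_le le_sup_right)) ?_
  rintro v ⟨hX, hY⟩ w hw
  obtain ⟨x, hx, y, hy, rfl⟩ := Submodule.mem_sup.1 hw
  rw [map_add, LinearMap.add_apply, hX x hx, hY y hy, add_zero]

lemma mem_orthogonal_iff_left (hB : B.IsAlt) {v : V} :
    v ∈ B.orthogonal X ↔ ∀ x ∈ X, B v x = 0 :=
  forall₂_congr fun _ _ => hB.isRefl.eq_iff

lemma exists_mem_apply_eq_one_of_notMem_orthogonal {v : V} (hv : v ∉ B.orthogonal X) :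
    ∃ x ∈ X, B x v = 1 := by
  obtain ⟨x, hx, hxv⟩ : ∃ x ∈ X, B x v ≠ 0 := by simpa [mem_orthogonal_iff] using hv
  exact ⟨(B x v)⁻¹ • x, X.smul_mem _ hx, by simp [hxv]⟩

lemma exists_mem_apply_eq_one_of_notMem_orthogonal' (hB : B.IsAlt) {v : V}
    (hv : v ∉ B.orthogonal X) : ∃ x ∈ X, B v x = 1 := by
  obtain ⟨x, hx, hxv⟩ := exists_mem_apply_eq_one_of_notMem_orthogonal hv
  exact ⟨-x, X.neg_mem hx, by rw [map_neg, hB.neg_eq, hxv]⟩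

/-- A bilinear form is symplectic if it is alternating and nondegenerate. -/
structure IsSymplectic (B : BilinForm K V) : Prop where
  isAlt : B.IsAlt
  nondegenerate : B.Nondegenerate

/-- A subspace is Lagrangian if it is its own orthogonal complement. -/
def IsLagrangian (B : BilinForm K V) (L : Submodule K V) : Prop :=
  B.orthogonal L = L

lemma IsLagrangian.apply_eq_zero (hL : IsLagrangian B L) {x y : V} (hx : x ∈ L) (hy : y ∈ L) :
    B x y = 0 :=
  hL.ge hy x hx

lemma IsSymplectic.of_isAlt (hB : B.IsAlt) (h : ∀ x, (∀ y, B x y = 0) → x = 0) :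
    IsSymplectic B :=
  ⟨hB, hB.isRefl.nondegenerate_iff_separatingLeft.2 h⟩

lemma IsSymplectic.restrict_of_disjoint_orthogonal (hB : IsSymplectic B)
    (hX : Disjoint X (B.orthogonal X)) : IsSymplectic (B.restrict X) :=
  ⟨fun x => hB.isAlt x, nondegenerate_restrict_of_disjoint_orthogonal B hB.isAlt.isRefl hX⟩

lemma IsSymplectic.exists_apply_eq_one (hB : IsSymplectic B) {e : V} (he : e ≠ 0) :
    ∃ f, B e f = 1 := by
  have he' : e ∉ B.orthogonal ⊤ := by
    rwa [orthogonal_top_eq_bot hB.nondegenerate, Submodule.mem_bot]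
  obtain ⟨f, -, hef⟩ := exists_mem_apply_eq_one_of_notMem_orthogonal' hB.isAlt he'
  exact ⟨f, hef⟩

lemma IsSymplectic.isometry_injective (hB : IsSymplectic B) (g : B →bᵢ B') :
    Function.Injective g :=
  (injective_iff_map_eq_zero g).2 fun x hx =>
    hB.nondegenerate.1 x fun y => by rw [← g.map_app, hx, LinearMap.map_zero₂]

lemma IsSymplectic.exists_isometryEquiv_coe_eq [FiniteDimensional K V'] (hB : IsSymplectic B)
    (g : B →bᵢ B') (h : finrank K V = finrank K V') : ∃ g' : B.IsometryEquiv B', ⇑g' = g :=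
  ⟨⟨LinearEquiv.ofInjectiveOfFinrankEq g.toLinearMap (hB.isometry_injective g) h, g.map_app⟩, rfl⟩

lemma exists_linearMap_apply_eq [FiniteDimensional K V'] {M : Type*} [AddCommGroup M] [Module K M]
    (hB' : B'.IsAlt) (hXY : Disjoint X' (B'.orthogonal Y')) (h : finrank K X' = finrank K Y')
    (φ : M →ₗ[K] Dual K Y') : ∃ σ : M →ₗ[K] X', ∀ m (y : Y'), B' (σ m) y = φ m y := by
  have hinj : Function.Injective (B'.domRestrict₁₂ X' Y') :=
    (injective_iff_map_eq_zero _).2 fun x hx => Subtype.ext <|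
      Submodule.disjoint_def.1 hXY x x.2 <| (mem_orthogonal_iff_left hB').2 fun y hy =>
        LinearMap.congr_fun hx ⟨y, hy⟩
  let D := LinearEquiv.ofInjectiveOfFinrankEq _ hinj (h.trans Subspace.dual_finrank_eq.symm)
  exact ⟨D.symm ∘ₗ φ, fun m y => LinearMap.congr_fun (D.apply_symm_apply (φ m)) y⟩

lemma exists_isometry_of_isCompl (hLW : IsCompl X Y) (hB : B.IsAlt) (hB' : B'.IsAlt)
    (hX : ∀ x ∈ X, ∀ y ∈ X, B x y = 0) (hX' : ∀ x ∈ X', ∀ y ∈ X', B' x y = 0)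
    (σ : X →ₗ[K] X') (g : B.restrict Y →bᵢ B'.restrict Y')
    (hσ : ∀ (x : X) (y : Y), B' (σ x) (g y) = B x y) :
    ∃ G : B →bᵢ B', X ≤ X'.comap G.toLinearMap ∧ Y ≤ Y'.comap G.toLinearMap := by
  let G := LinearMap.ofIsCompl hLW (X'.subtype ∘ₗ σ) (Y'.subtype ∘ₗ g.toLinearMap)
  have hGX (x : X) : G x = σ x := by simp [G]
  have hGY (y : Y) : G y = g y := by simp [G]
  refine ⟨⟨G, fun u v => ?_⟩, fun x hx => ?_, fun y hy => ?_⟩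
  · obtain ⟨x, y, rfl, -⟩ := Submodule.existsUnique_add_of_isCompl hLW u
    obtain ⟨z, w, rfl, -⟩ := Submodule.existsUnique_add_of_isCompl hLW v
    have hg : B' (g y) (g w) = B y w := g.map_app y w
    have hσ' : B' (g y) (σ z) = B y z := by rw [← hB'.neg_eq, hσ, hB.neg_eq]
    change B' (G _) (G _) = _
    simp only [map_add, LinearMap.add_apply, hGX, hGY, hσ, hσ', hg, hX x x.2 z z.2,
      hX' (σ x) (σ x).2 (σ z) (σ z).2]
  · change G x ∈ X'
    rw [hGX ⟨x, hx⟩]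
    exact (σ ⟨x, hx⟩).2
  · change G y ∈ Y'
    rw [hGY ⟨y, hy⟩]
    exact (g ⟨y, hy⟩).2

section FiniteDimensional

variable [FiniteDimensional K V]

lemma IsSymplectic.finrank_orthogonal_add (hB : IsSymplectic B) (X : Submodule K V) :
    finrank K (B.orthogonal X) + finrank K X = finrank K V := by
  rw [finrank_orthogonal hB.nondegenerate, Nat.sub_add_cancel X.finrank_le]

lemma IsLagrangian.two_mul_finrank (hL : IsLagrangian B L) (hB : IsSymplectic B) :
    2 * finrank K L = finrank K V := by
  rw [← hB.finrank_orthogonal_add L, hL, two_mul]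

lemma IsLagrangian.finrank_inf_orthogonal_add (hL : IsLagrangian B L) (hB : IsSymplectic B)
    (W : Submodule K V) :
    finrank K ↥(L ⊓ B.orthogonal W) + finrank K W = finrank K L + finrank K ↥(L ⊓ W) := by
  have hsup := hB.finrank_orthogonal_add (L ⊔ W)
  rw [orthogonal_sup, hL] at hsup
  have := hL.two_mul_finrank hB
  have := Submodule.finrank_sup_add_finrank_inf_eq L W
  omega

lemma finrank_eq_finrank_inf_ker_add (φ : V →ₗ[K] K) {v : V} (hv : φ v = 1)
    (hX : ∀ x ∈ X, φ x • v ∈ X) [Decidable (v ∈ X)] :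
    finrank K X = finrank K ↥(X ⊓ LinearMap.ker φ) + if v ∈ X then 1 else 0 := by
  split_ifs with hvX
  · have hker : finrank K (LinearMap.ker (φ.domRestrict X)) = finrank K ↥(X ⊓ LinearMap.ker φ) := by
      rw [LinearMap.ker_domRestrict, ← Submodule.finrank_map_subtype_eq,
        Submodule.map_comap_subtype]
    have hrange : LinearMap.range (φ.domRestrict X) = ⊤ :=
      LinearMap.range_eq_top.2 fun c => ⟨c • ⟨v, hvX⟩, by simp [hv]⟩
    rw [← LinearMap.finrank_range_add_finrank_ker (φ.domRestrict X), hker, hrange, finrank_top,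
      finrank_self, add_comm]
  · have hle : X ≤ LinearMap.ker φ := fun x hx => by
      by_contra hφx
      exact hvX ((X.smul_mem_iff hφx).1 (hX x hx))
    rw [inf_eq_left.2 hle, add_zero]

end FiniteDimensional

end Orthogonal

section HyperbolicPair

variable {K V V' : Type*} [Field K] [AddCommGroup V] [Module K V] [AddCommGroup V'] [Module K V']
  {B : BilinForm K V} {B' : BilinForm K V'} {e f : V} {e' f' : V'}
  {X Y : Submodule K V} {X' : Submodule K V'}

/-- The orthogonal complement of the plane spanned by `e` and `f`, for an alternating form. -/
def hyperbolicCompl (B : BilinForm K V) (e f : V) : Submodule K V :=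
  LinearMap.ker (B.flip f) ⊓ LinearMap.ker (B e)

lemma mem_hyperbolicCompl {x : V} : x ∈ hyperbolicCompl B e f ↔ B x f = 0 ∧ B e x = 0 := by
  simp [hyperbolicCompl]

lemma apply_add_hyperbolicCompl (hB : B.IsAlt) (hef : B e f = 1) (a b c d : K)
    (m m' : hyperbolicCompl B e f) :
    B (a • e + b • f + m) (c • e + d • f + m') = a * d - b * c + B m m' := by
  obtain ⟨hmf, hem⟩ := mem_hyperbolicCompl.1 m.2
  obtain ⟨hmf', hem'⟩ := mem_hyperbolicCompl.1 m'.2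
  have hfe : B f e = -1 := by rw [← hB.neg_eq, hef]
  have hme : B m e = 0 := by rw [← hB.neg_eq, hem, neg_zero]
  have hfm' : B f m' = 0 := by rw [← hB.neg_eq, hmf', neg_zero]
  simp only [map_add, map_smul, LinearMap.add_apply, LinearMap.smul_apply, smul_eq_mul,
    hB.self_eq_zero, hef, hfe, hmf, hem', hme, hfm']
  ring

/-- The projection onto the orthogonal complement of the hyperbolic plane spanned by `e` and `f`,
along that plane. -/
def hyperbolicProj (hB : B.IsAlt) (hef : B e f = 1) : V →ₗ[K] hyperbolicCompl B e f :=
  LinearMap.codRestrict _ (LinearMap.id - (B.flip f).smulRight e - (B e).smulRight f) fun x => by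
    simp [mem_hyperbolicCompl, hB.self_eq_zero, hef]

lemma coe_hyperbolicProj (hB : B.IsAlt) (hef : B e f = 1) (x : V) :
    (hyperbolicProj hB hef x : V) = x - B x f • e - B e x • f :=
  rfl

lemma eq_add_hyperbolicProj (hB : B.IsAlt) (hef : B e f = 1) (x : V) :
    x = B x f • e + B e x • f + hyperbolicProj hB hef x := by
  rw [coe_hyperbolicProj]
  abel

lemma apply_eq_apply_hyperbolicProj (hB : B.IsAlt) (hef : B e f = 1) (x y : V) :
    B x y = B x f * B e y - B e x * B y f + B (hyperbolicProj hB hef x) (hyperbolicProj hB hef y) :=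
  calc
    B x y = B (B x f • e + B e x • f + hyperbolicProj hB hef x)
        (B y f • e + B e y • f + hyperbolicProj hB hef y) := by
      rw [← eq_add_hyperbolicProj, ← eq_add_hyperbolicProj]
    _ = _ := apply_add_hyperbolicCompl hB hef ..

lemma apply_hyperbolicProj_right (hB : B.IsAlt) (hef : B e f = 1) (x : V)
    (m : hyperbolicCompl B e f) : B (hyperbolicProj hB hef x) m = B x m := by
  obtain ⟨hmf, hem⟩ := mem_hyperbolicCompl.1 m.2
  have hfm : B f m = 0 := by rw [← hB.neg_eq, hmf, neg_zero]
  simp [coe_hyperbolicProj, hem, hfm]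

lemma IsSymplectic.restrict_hyperbolicCompl (hB : IsSymplectic B) (hef : B e f = 1) :
    IsSymplectic (B.restrict (hyperbolicCompl B e f)) := by
  refine .of_isAlt (fun x => hB.isAlt x) fun x hx => Subtype.ext (hB.nondegenerate.2 x fun y => ?_)
  rw [← apply_hyperbolicProj_right hB.isAlt hef, ← hB.isAlt.neg_eq, neg_eq_zero]
  exact hx (hyperbolicProj hB.isAlt hef y)

/-- The extension of an isometry between the complements of two hyperbolic planes by `e ↦ e'`,
`f ↦ f'`. -/
def hyperbolicExtendIsometry (hB : B.IsAlt) (hef : B e f = 1) (hB' : B'.IsAlt)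
    (hef' : B' e' f' = 1)
    (g : B.restrict (hyperbolicCompl B e f) →bᵢ B'.restrict (hyperbolicCompl B' e' f')) :
    B →bᵢ B' where
  toLinearMap :=
    (B.flip f).smulRight e' + (B e).smulRight f' +
      (hyperbolicCompl B' e' f').subtype ∘ₗ g.toLinearMap ∘ₗ hyperbolicProj hB hef
  map_app' x y := by
    have hg : ∀ m m', B' (g m) (g m') = B m m' := g.map_app
    rw [apply_eq_apply_hyperbolicProj hB hef x y, ← hg, ← apply_add_hyperbolicCompl hB' hef']
    rfl

lemma hyperbolicExtendIsometry_apply (hB : B.IsAlt) (hef : B e f = 1) (hB' : B'.IsAlt)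
    (hef' : B' e' f' = 1)
    (g : B.restrict (hyperbolicCompl B e f) →bᵢ B'.restrict (hyperbolicCompl B' e' f')) (x : V) :
    hyperbolicExtendIsometry hB hef hB' hef' g x =
      B x f • e' + B e x • f' + g (hyperbolicProj hB hef x) :=
  rfl

/-- A subspace is adapted to a hyperbolic pair `e, f` if it is stable under the two projections
`x ↦ B x f • e` and `x ↦ B e x • f`. Equivalently, it is spanned by a subset of `{e, f}` together
with a subspace of the complement of the plane. -/
def IsAdapted (B : BilinForm K V) (e f : V) (X : Submodule K V) : Prop :=
  ∀ x ∈ X, B x f • e ∈ X ∧ B e x • f ∈ X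

namespace IsAdapted

lemma top : IsAdapted B e f ⊤ :=
  fun _ _ => ⟨trivial, trivial⟩

lemma inf (hX : IsAdapted B e f X) (hY : IsAdapted B e f Y) : IsAdapted B e f (X ⊓ Y) :=
  fun x hx => ⟨⟨(hX x hx.1).1, (hY x hx.2).1⟩, ⟨(hX x hx.1).2, (hY x hx.2).2⟩⟩

lemma orthogonal (hX : IsAdapted B e f X) (hB : B.IsAlt) : IsAdapted B e f (B.orthogonal X) := by
  refine fun x hx => ⟨fun w hw => ?_, fun w hw => ?_⟩
  · have := hx _ (hX w hw).2
    simp only [map_smul, LinearMap.smul_apply, smul_eq_mul] at this ⊢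
    rw [← hB.neg_eq f x, ← hB.neg_eq e w]
    linear_combination this
  · have := hx _ (hX w hw).1
    simp only [map_smul, LinearMap.smul_apply, smul_eq_mul] at this ⊢
    linear_combination this

lemma hyperbolicProj_mem (hX : IsAdapted B e f X) (hB : B.IsAlt) (hef : B e f = 1) {x : V}
    (hx : x ∈ X) : (hyperbolicProj hB hef x : V) ∈ X := by
  rw [coe_hyperbolicProj]
  exact X.sub_mem (X.sub_mem hx (hX x hx).1) (hX x hx).2

lemma left_mem_orthogonal_iff (hX : IsAdapted B e f X) (hB : B.IsAlt) (hef : B e f = 1) :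
    e ∈ B.orthogonal X ↔ f ∉ X := by
  rw [mem_orthogonal_iff_left hB]
  refine ⟨fun he hf => one_ne_zero (hef.symm.trans (he f hf)), fun hf x hx => ?_⟩
  by_contra hex
  exact hf ((X.smul_mem_iff hex).1 (hX x hx).2)

lemma right_mem_orthogonal_iff (hX : IsAdapted B e f X) (hef : B e f = 1) :
    f ∈ B.orthogonal X ↔ e ∉ X := by
  refine ⟨fun hf he => one_ne_zero (hef.symm.trans (hf e he)), fun he x hx => ?_⟩
  by_contra hxf
  exact he ((X.smul_mem_iff hxf).1 (hX x hx).1)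

lemma orthogonal_comap (hX : IsAdapted B e f X) (hB : B.IsAlt) (hef : B e f = 1) :
    (B.restrict (hyperbolicCompl B e f)).orthogonal (X.comap (hyperbolicCompl B e f).subtype) =
      (B.orthogonal X).comap (hyperbolicCompl B e f).subtype := by
  refine le_antisymm (fun m hm x hx => ?_) fun m hm x hx => hm x hx
  rw [Submodule.subtype_apply, ← apply_hyperbolicProj_right hB hef]
  exact hm (hyperbolicProj hB hef x) (hX.hyperbolicProj_mem hB hef hx)

lemma hyperbolicExtendIsometry_mem (hX : IsAdapted B e f X) (hB : B.IsAlt) (hef : B e f = 1)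
    (hB' : B'.IsAlt) (hef' : B' e' f' = 1) (he : e ∈ X → e' ∈ X') (hf : f ∈ X → f' ∈ X')
    {g : B.restrict (hyperbolicCompl B e f) →bᵢ B'.restrict (hyperbolicCompl B' e' f')}
    (hg : ∀ m : hyperbolicCompl B e f, (m : V) ∈ X → (g m : V') ∈ X') {x : V} (hx : x ∈ X) :
    hyperbolicExtendIsometry hB hef hB' hef' g x ∈ X' := by
  rw [hyperbolicExtendIsometry_apply]
  refine X'.add_mem (X'.add_mem ?_ ?_) (hg _ (hX.hyperbolicProj_mem hB hef hx))
  · rcases eq_or_ne (B x f) 0 with hxf | hxf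
    · simp [hxf]
    · exact X'.smul_mem _ (he ((X.smul_mem_iff hxf).1 (hX x hx).1))
  · rcases eq_or_ne (B e x) 0 with hex | hex
    · simp [hex]
    · exact X'.smul_mem _ (hf ((X.smul_mem_iff hex).1 (hX x hx).2))

open Classical in
lemma finrank_eq [FiniteDimensional K V] (hX : IsAdapted B e f X) (hB : B.IsAlt)
    (hef : B e f = 1) :
    finrank K X = finrank K (X.comap (hyperbolicCompl B e f).subtype) +
      (if f ∈ X then 1 else 0) + if e ∈ X then 1 else 0 := by
  have hf : f ∈ X ⊓ LinearMap.ker (B.flip f) ↔ f ∈ X := by simp [hB.self_eq_zero]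
  have hstep := finrank_eq_finrank_inf_ker_add (X := X ⊓ LinearMap.ker (B.flip f)) (B e) hef
    fun x hx => ⟨(hX x hx.1).2, by simp [hB.self_eq_zero]⟩
  rw [finrank_eq_finrank_inf_ker_add (B.flip f) (by simpa using hef) fun x hx => (hX x hx).1,
    hstep, inf_assoc, ← hyperbolicCompl, inf_comm X, ← Submodule.map_comap_subtype,
    Submodule.finrank_map_subtype_eq]
  simp only [hf]

lemma finrank_comap_eq [FiniteDimensional K V] [FiniteDimensional K V'] (hX : IsAdapted B e f X)
    (hX' : IsAdapted B' e' f' X') (hB : B.IsAlt) (hef : B e f = 1) (hB' : B'.IsAlt)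
    (hef' : B' e' f' = 1) (he : e ∈ X ↔ e' ∈ X') (hf : f ∈ X ↔ f' ∈ X')
    (h : finrank K X = finrank K X') :
    finrank K (X.comap (hyperbolicCompl B e f).subtype) =
      finrank K (X'.comap (hyperbolicCompl B' e' f').subtype) := by
  classical
  have hdim := hX.finrank_eq hB hef
  have hdim' := hX'.finrank_eq hB' hef'
  simp only [he, hf] at hdim
  omega

end IsAdapted

section FiniteDimensional

variable [FiniteDimensional K V] [FiniteDimensional K V']

lemma finrank_hyperbolicCompl (hB : B.IsAlt) (hef : B e f = 1) :
    finrank K (hyperbolicCompl B e f) + 2 = finrank K V := by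
  rw [← finrank_top K V, IsAdapted.top.finrank_eq hB hef, Submodule.comap_top, finrank_top]
  simp

lemma IsSymplectic.equivalent_of_finrank_eq (hB : IsSymplectic B) (hB' : IsSymplectic B')
    (h : finrank K V = finrank K V') : B.Equivalent B' := by
  suffices hg : Nonempty (B →bᵢ B') by
    obtain ⟨g⟩ := hg
    obtain ⟨g', -⟩ := hB.exists_isometryEquiv_coe_eq g h
    exact ⟨g'⟩
  induction hn : finrank K V using Nat.strong_induction_on generalizing V V' with
  | _ n ih =>
  subst hn
  rcases subsingleton_or_nontrivial V with _ | hV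
  · exact ⟨0⟩
  have : Nontrivial V' := finrank_pos_iff.1 (h ▸ finrank_pos_iff.2 hV)
  obtain ⟨e, he⟩ := exists_ne (0 : V)
  obtain ⟨e', he'⟩ := exists_ne (0 : V')
  obtain ⟨f, hef⟩ := hB.exists_apply_eq_one he
  obtain ⟨f', hef'⟩ := hB'.exists_apply_eq_one he'
  have hdim := finrank_hyperbolicCompl hB.isAlt hef
  have hdim' := finrank_hyperbolicCompl hB'.isAlt hef'
  obtain ⟨g⟩ := ih _ (by omega) (hB.restrict_hyperbolicCompl hef)
    (hB'.restrict_hyperbolicCompl hef') (by omega) rfl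
  exact ⟨hyperbolicExtendIsometry hB.isAlt hef hB'.isAlt hef' g⟩

end FiniteDimensional

end HyperbolicPair

section RelativePosition

variable {K V V' : Type*} [Field K] [AddCommGroup V] [Module K V] [AddCommGroup V'] [Module K V']
  {B : BilinForm K V} {B' : BilinForm K V'} {e f : V} {e' f' : V'}
  {L W : Submodule K V} {L' W' : Submodule K V'} {p q : Prop}

/-- A hyperbolic pair `e, f` such that both the Lagrangian subspace `L` and the subspace `W` split
along the plane it spans. The propositions `p` and `q` record whether `e` and `f` lie in `W`, so
that a pair in `V` and a pair in `V'` are of the same kind if they share `p` and `q`. -/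
structure IsSplittingPair (B : BilinForm K V) (L W : Submodule K V) (p q : Prop) (e f : V) :
    Prop where
  apply_eq_one : B e f = 1
  left_mem : e ∈ L
  isAdapted : IsAdapted B e f W
  left_mem_iff : e ∈ W ↔ p
  right_mem_iff : f ∈ W ↔ q

lemma IsSplittingPair.isAdapted_lagrangian (h : IsSplittingPair B L W p q e f)
    (hL : IsLagrangian B L) : IsAdapted B e f L :=
  fun x hx => ⟨L.smul_mem _ h.left_mem, by simp [hL.apply_eq_zero h.left_mem hx]⟩

lemma IsSplittingPair.right_notMem (h : IsSplittingPair B L W p q e f) (hL : IsLagrangian B L) :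
    f ∉ L :=
  fun hf => zero_ne_one ((hL.apply_eq_zero h.left_mem hf).symm.trans h.apply_eq_one)

lemma IsSplittingPair.isLagrangian_comap (h : IsSplittingPair B L W p q e f) (hB : B.IsAlt)
    (hL : IsLagrangian B L) :
    IsLagrangian (B.restrict (hyperbolicCompl B e f)) (L.comap (hyperbolicCompl B e f).subtype) :=
  ((h.isAdapted_lagrangian hL).orthogonal_comap hB h.apply_eq_one).trans (by rw [hL])

lemma exists_isSplittingPair_left (hB : IsSymplectic B) (h : L ⊓ W ⊓ B.orthogonal W ≠ ⊥) :
    ∃ e f, IsSplittingPair B L W True False e f := by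
  obtain ⟨e, ⟨⟨heL, heW⟩, heO⟩, he⟩ := Submodule.exists_mem_ne_zero_of_ne_bot h
  obtain ⟨f, hef⟩ := hB.exists_apply_eq_one he
  have hW : ∀ w ∈ W, B e w = 0 := (mem_orthogonal_iff_left hB.isAlt).1 heO
  exact ⟨e, f, hef, heL, fun w hw => ⟨W.smul_mem _ heW, by simp [hW w hw]⟩, iff_true_intro heW,
    iff_false_intro fun hf => zero_ne_one ((hW f hf).symm.trans hef)⟩

lemma exists_isSplittingPair_right (hL : IsLagrangian B L) (h : ¬ W ⊓ B.orthogonal W ≤ L) :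
    ∃ e f, IsSplittingPair B L W False True e f := by
  obtain ⟨f, ⟨hfW, hfO⟩, hfL⟩ := SetLike.not_le_iff_exists.1 h
  rw [← hL] at hfL
  obtain ⟨e, heL, hef⟩ := exists_mem_apply_eq_one_of_notMem_orthogonal hfL
  exact ⟨e, f, hef, heL, fun w hw => ⟨by simp [hfO w hw], W.smul_mem _ hfW⟩,
    iff_false_intro fun he => zero_ne_one ((hfO e he).symm.trans hef), iff_true_intro hfW⟩

lemma exists_isSplittingPair_both (hB : B.IsAlt) (h : ¬ L ⊓ W ≤ B.orthogonal W) :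
    ∃ e f, IsSplittingPair B L W True True e f := by
  obtain ⟨e, ⟨heL, heW⟩, heO⟩ := SetLike.not_le_iff_exists.1 h
  obtain ⟨f, hfW, hef⟩ := exists_mem_apply_eq_one_of_notMem_orthogonal' hB heO
  exact ⟨e, f, hef, heL, fun w _ => ⟨W.smul_mem _ heW, W.smul_mem _ hfW⟩, iff_true_intro heW,
    iff_true_intro hfW⟩

lemma exists_isSplittingPair_neither [FiniteDimensional K V] (hB : IsSymplectic B)
    (h : ¬ L ⊓ B.orthogonal W ≤ W) : ∃ e f, IsSplittingPair B L W False False e f := by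
  have hW : B.orthogonal (B.orthogonal W) = W :=
    orthogonal_orthogonal hB.nondegenerate hB.isAlt.isRefl W
  obtain ⟨e, f, hef, heL, hWO, he, hf⟩ :=
    exists_isSplittingPair_both (L := L) (W := B.orthogonal W) hB.isAlt (by rwa [hW])
  have hadapted : IsAdapted B e f W := hW ▸ hWO.orthogonal hB.isAlt
  exact ⟨e, f, hef, heL, hadapted,
    iff_false_intro ((hadapted.right_mem_orthogonal_iff hef).1 (of_iff_true hf)),
    iff_false_intro ((hadapted.left_mem_orthogonal_iff hB.isAlt hef).1 (of_iff_true he))⟩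

/-- Equality of the dimensions of the ambient spaces, of the subspaces, and of the three
intersections that determine the position of `W` relative to the Lagrangian subspace `L`. In the
notation `r₁, r₂, s`, these have dimensions `r₁ + r₂`, `r₁ + s` and `r₁`. -/
structure SameInvariants (B : BilinForm K V) (L W : Submodule K V) (B' : BilinForm K V')
    (L' W' : Submodule K V') : Prop where
  finrank_space : finrank K V = finrank K V'
  finrank_subspace : finrank K W = finrank K W'
  finrank_radical : finrank K ↥(W ⊓ B.orthogonal W) = finrank K ↥(W' ⊓ B'.orthogonal W')
  finrank_inf : finrank K ↥(L ⊓ W) = finrank K ↥(L' ⊓ W')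
  finrank_inf_radical :
    finrank K ↥(L ⊓ W ⊓ B.orthogonal W) = finrank K ↥(L' ⊓ W' ⊓ B'.orthogonal W')

lemma map_orthogonal (g : B.IsometryEquiv B') (W : Submodule K V) :
    (B.orthogonal W).map g.toLinearEquiv.toLinearMap =
      B'.orthogonal (W.map g.toLinearEquiv.toLinearMap) := by
  ext x
  obtain ⟨x, rfl⟩ := g.toLinearEquiv.surjective x
  have hg : ∀ y, B' (g.toLinearEquiv y) (g.toLinearEquiv x) = B y x := fun y => g.map_app x y
  simp only [mem_orthogonal_iff, Submodule.mem_map, LinearEquiv.coe_coe, forall_exists_index,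
    and_imp, forall_apply_eq_imp_iff₂, hg, EmbeddingLike.apply_eq_iff_eq, exists_eq_right]

lemma SameInvariants.of_isometryEquiv (g : B.IsometryEquiv B')
    (hL : L.map g.toLinearEquiv.toLinearMap = L')
    (hW : W.map g.toLinearEquiv.toLinearMap = W') :
    SameInvariants B L W B' L' W' := by
  have hinj : Function.Injective g.toLinearEquiv.toLinearMap := g.toLinearEquiv.injective
  have hinf {X Y : Submodule K V} := Submodule.map_inf (p := X) (q := Y) _ hinj
  have hrank (X : Submodule K V) := (g.toLinearEquiv.finrank_map_eq X).symm
  subst hL hW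
  refine ⟨g.toLinearEquiv.finrank_eq, hrank _, ?_, ?_, ?_⟩
  · rw [← map_orthogonal, ← hinf, ← hrank]
  · rw [← hinf, ← hrank]
  · rw [← map_orthogonal, ← hinf, ← hinf, ← hrank]

variable [FiniteDimensional K V] [FiniteDimensional K V']

namespace SameInvariants

lemma finrank_lagrangian (h : SameInvariants B L W B' L' W') (hB : IsSymplectic B)
    (hB' : IsSymplectic B') (hL : IsLagrangian B L) (hL' : IsLagrangian B' L') :
    finrank K L = finrank K L' := by
  have := hL.two_mul_finrank hB
  have := hL'.two_mul_finrank hB'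
  have := h.finrank_space
  omega

lemma finrank_inf_orthogonal (h : SameInvariants B L W B' L' W') (hB : IsSymplectic B)
    (hB' : IsSymplectic B') (hL : IsLagrangian B L) (hL' : IsLagrangian B' L') :
    finrank K ↥(L ⊓ B.orthogonal W) = finrank K ↥(L' ⊓ B'.orthogonal W') := by
  have := hL.finrank_inf_orthogonal_add hB W
  have := hL'.finrank_inf_orthogonal_add hB' W'
  have := h.finrank_lagrangian hB hB' hL hL'
  have := h.finrank_subspace
  have := h.finrank_inf
  omega

lemma comap_hyperbolicCompl (h : SameInvariants B L W B' L' W') (hB : B.IsAlt)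
    (hB' : B'.IsAlt) (hL : IsLagrangian B L) (hL' : IsLagrangian B' L')
    (hef : IsSplittingPair B L W p q e f) (hef' : IsSplittingPair B' L' W' p q e' f') :
    SameInvariants (B.restrict (hyperbolicCompl B e f)) (L.comap (hyperbolicCompl B e f).subtype)
      (W.comap (hyperbolicCompl B e f).subtype) (B'.restrict (hyperbolicCompl B' e' f'))
      (L'.comap (hyperbolicCompl B' e' f').subtype)
      (W'.comap (hyperbolicCompl B' e' f').subtype) := by
  obtain ⟨hpair, heL, hW, he, hf⟩ := id hef
  obtain ⟨hpair', heL', hW', he', hf'⟩ := id hef'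
  replace he := he.trans he'.symm
  replace hf := hf.trans hf'.symm
  have hLa := hef.isAdapted_lagrangian hL
  have hLa' := hef'.isAdapted_lagrangian hL'
  have heO : e ∈ B.orthogonal W ↔ e' ∈ B'.orthogonal W' := by
    rw [hW.left_mem_orthogonal_iff hB hpair, hW'.left_mem_orthogonal_iff hB' hpair', hf]
  have hfO : f ∈ B.orthogonal W ↔ f' ∈ B'.orthogonal W' := by
    rw [hW.right_mem_orthogonal_iff hpair, hW'.right_mem_orthogonal_iff hpair', he]
  have hWO := hW.orthogonal hB
  have hWO' := hW'.orthogonal hB'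
  have heL_iff : e ∈ L ↔ e' ∈ L' := iff_of_true heL heL'
  have hfL_iff : f ∈ L ↔ f' ∈ L' := iff_of_false (hef.right_notMem hL) (hef'.right_notMem hL')
  have transfer {X : Submodule K V} {X' : Submodule K V'} (hX : IsAdapted B e f X)
      (hX' : IsAdapted B' e' f' X') := hX.finrank_comap_eq hX' hB hpair hB' hpair'
  constructor
  · have hdim := finrank_hyperbolicCompl hB hpair
    have hdim' := finrank_hyperbolicCompl hB' hpair'
    have := h.finrank_space
    omega
  · exact transfer hW hW' he hf h.finrank_subspace
  · rw [hW.orthogonal_comap hB hpair, hW'.orthogonal_comap hB' hpair']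
    exact transfer (hW.inf hWO) (hW'.inf hWO') (and_congr he heO) (and_congr hf hfO)
      h.finrank_radical
  · exact transfer (hLa.inf hW) (hLa'.inf hW') (and_congr heL_iff he) (and_congr hfL_iff hf)
      h.finrank_inf
  · rw [hW.orthogonal_comap hB hpair, hW'.orthogonal_comap hB' hpair']
    exact transfer ((hLa.inf hW).inf hWO) ((hLa'.inf hW').inf hWO')
      (and_congr (and_congr heL_iff he) heO) (and_congr (and_congr hfL_iff hf) hfO)
      h.finrank_inf_radical

lemma exists_isSplittingPair (h : SameInvariants B L W B' L' W') (hB : IsSymplectic B)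
    (hB' : IsSymplectic B') (hL : IsLagrangian B L) (hL' : IsLagrangian B' L')
    (hne : ¬ (W ⊓ B.orthogonal W = ⊥ ∧ L ⊓ W = ⊥ ∧ L ⊓ B.orthogonal W = ⊥)) :
    ∃ p q, (∃ e f, IsSplittingPair B L W p q e f) ∧ ∃ e f, IsSplittingPair B' L' W' p q e f := by
  have hrank := h.finrank_inf_radical
  by_cases hright : W ⊓ B.orthogonal W ≤ L
  swap
  · have hrank' : finrank K ↥(W ⊓ B.orthogonal W ⊓ L) =
        finrank K ↥(W' ⊓ B'.orthogonal W' ⊓ L') := by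
      rwa [inf_comm, ← inf_assoc, inf_comm _ L', ← inf_assoc]
    exact ⟨_, _, exists_isSplittingPair_right hL hright, exists_isSplittingPair_right hL'
      (mt (le_iff_le_of_finrank_eq h.finrank_radical hrank').2 hright)⟩
  by_cases hboth : L ⊓ W ≤ B.orthogonal W
  swap
  · exact ⟨_, _, exists_isSplittingPair_both hB.isAlt hboth, exists_isSplittingPair_both hB'.isAlt
      (mt (le_iff_le_of_finrank_eq h.finrank_inf hrank).2 hboth)⟩
  by_cases hneither : L ⊓ B.orthogonal W ≤ W
  swap
  · have hrank' : finrank K ↥(L ⊓ B.orthogonal W ⊓ W) =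
        finrank K ↥(L' ⊓ B'.orthogonal W' ⊓ W') := by
      rwa [inf_right_comm, inf_right_comm L']
    have hrankO := h.finrank_inf_orthogonal hB hB' hL hL'
    exact ⟨_, _, exists_isSplittingPair_neither hB hneither, exists_isSplittingPair_neither hB'
      (mt (le_iff_le_of_finrank_eq hrankO hrank').2 hneither)⟩
  -- Now `W ⊓ W^⊥`, `L ⊓ W` and `L ⊓ W^⊥` all coincide with `L ⊓ W ⊓ W^⊥`.
  have hleft : L ⊓ W ⊓ B.orthogonal W ≠ ⊥ := fun hbot => hne
    ⟨le_bot_iff.1 (hbot ▸ le_inf (le_inf hright inf_le_left) inf_le_right),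
      le_bot_iff.1 (hbot ▸ le_inf le_rfl hboth),
      le_bot_iff.1 (hbot ▸ le_inf (le_inf inf_le_left hneither) inf_le_right)⟩
  exact ⟨_, _, exists_isSplittingPair_left hB hleft, exists_isSplittingPair_left hB'
    (mt (eq_bot_iff_of_finrank_eq hrank).2 hleft)⟩

lemma exists_isometry_of_disjoint (h : SameInvariants B L W B' L' W') (hB : IsSymplectic B)
    (hB' : IsSymplectic B') (hL : IsLagrangian B L) (hL' : IsLagrangian B' L')
    (hW : W ⊓ B.orthogonal W = ⊥) (hLW : L ⊓ W = ⊥) (hLO : L ⊓ B.orthogonal W = ⊥) :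
    ∃ g : B →bᵢ B', L ≤ L'.comap g.toLinearMap ∧ W ≤ W'.comap g.toLinearMap := by
  have hW' := (eq_bot_iff_of_finrank_eq h.finrank_radical).1 hW
  have hLO' := (eq_bot_iff_of_finrank_eq (h.finrank_inf_orthogonal hB hB' hL hL')).1 hLO
  have hrank : finrank K L = finrank K W := by
    have := hL.finrank_inf_orthogonal_add hB W
    rw [hLO, hLW, finrank_bot] at this
    omega
  have hLcompl : IsCompl L W := by
    have := hL.two_mul_finrank hB
    exact (Submodule.isCompl_iff_disjoint _ _ (by omega)).2 (disjoint_iff.2 hLW)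
  have hrank' : finrank K L' = finrank K W' := by
    rw [← h.finrank_lagrangian hB hB' hL hL', hrank, h.finrank_subspace]
  obtain ⟨g⟩ := (hB.restrict_of_disjoint_orthogonal (disjoint_iff.2 hW)).equivalent_of_finrank_eq
    (hB'.restrict_of_disjoint_orthogonal (disjoint_iff.2 hW')) h.finrank_subspace
  -- `L` and `L'` are the duals of `W` and `W'`, so `σ` has to be the contragredient of `g`.
  obtain ⟨σ, hσ⟩ := exists_linearMap_apply_eq hB'.isAlt (disjoint_iff.2 hLO') hrank'
    (g.symm.toLinearEquiv.toLinearMap.dualMap ∘ₗ B.domRestrict₁₂ L W)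
  refine exists_isometry_of_isCompl hLcompl hB.isAlt hB'.isAlt (fun _ hx _ => hL.apply_eq_zero hx)
    (fun _ hx _ => hL'.apply_eq_zero hx) σ g.toIsometry
    fun x y => (hσ x (g y)).trans ?_
  exact congrArg (fun y : W => B x y) (g.toLinearEquiv.symm_apply_apply y)

lemma exists_isometry (h : SameInvariants B L W B' L' W') (hB : IsSymplectic B)
    (hB' : IsSymplectic B') (hL : IsLagrangian B L) (hL' : IsLagrangian B' L') :
    ∃ g : B →bᵢ B', L ≤ L'.comap g.toLinearMap ∧ W ≤ W'.comap g.toLinearMap := by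
  induction hn : finrank K V using Nat.strong_induction_on generalizing V V' with
  | _ n ih =>
  subst hn
  by_cases hbot : W ⊓ B.orthogonal W = ⊥ ∧ L ⊓ W = ⊥ ∧ L ⊓ B.orthogonal W = ⊥
  · exact h.exists_isometry_of_disjoint hB hB' hL hL' hbot.1 hbot.2.1 hbot.2.2
  obtain ⟨p, q, ⟨e, f, hef⟩, e', f', hef'⟩ := h.exists_isSplittingPair hB hB' hL hL' hbot
  have hdim := finrank_hyperbolicCompl hB.isAlt hef.apply_eq_one
  obtain ⟨g, hgL, hgW⟩ := ih _ (by omega)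
    (h.comap_hyperbolicCompl hB.isAlt hB'.isAlt hL hL' hef hef')
    (hB.restrict_hyperbolicCompl hef.apply_eq_one) (hB'.restrict_hyperbolicCompl hef'.apply_eq_one)
    (hef.isLagrangian_comap hB.isAlt hL) (hef'.isLagrangian_comap hB'.isAlt hL') rfl
  refine ⟨hyperbolicExtendIsometry hB.isAlt hef.apply_eq_one hB'.isAlt hef'.apply_eq_one g,
    fun x hx => ?_, fun x hx => ?_⟩
  · exact (hef.isAdapted_lagrangian hL).hyperbolicExtendIsometry_mem hB.isAlt hef.apply_eq_one
      hB'.isAlt hef'.apply_eq_one (fun _ => hef'.left_mem)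
      (fun hf => absurd hf (hef.right_notMem hL)) (fun m hm => hgL hm) hx
  · exact hef.isAdapted.hyperbolicExtendIsometry_mem hB.isAlt hef.apply_eq_one hB'.isAlt
      hef'.apply_eq_one (hef'.left_mem_iff.2 ∘ hef.left_mem_iff.1)
      (hef'.right_mem_iff.2 ∘ hef.right_mem_iff.1) (fun m hm => hgW hm) hx

end SameInvariants

theorem siegel_parabolic_orbits_on_grassmannian_general (hB : IsSymplectic B)
    (hB' : IsSymplectic B') (hL : IsLagrangian B L) (hL' : IsLagrangian B' L') :
    (∃ g : B.IsometryEquiv B', L.map g.toLinearEquiv.toLinearMap = L' ∧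
        W.map g.toLinearEquiv.toLinearMap = W') ↔
      SameInvariants B L W B' L' W' := by
  refine ⟨fun ⟨g, hgL, hgW⟩ => .of_isometryEquiv g hgL hgW, fun h => ?_⟩
  obtain ⟨g₀, hgL, hgW⟩ := h.exists_isometry hB hB' hL hL'
  obtain ⟨g, hg⟩ := hB.exists_isometryEquiv_coe_eq g₀ h.finrank_space
  have map_eq {X : Submodule K V} {X' : Submodule K V'} (hX : X ≤ X'.comap g₀.toLinearMap)
      (hrank : finrank K X = finrank K X') : X.map g.toLinearEquiv.toLinearMap = X' := by
    refine Submodule.eq_of_le_of_finrank_eq (Submodule.map_le_iff_le_comap.2 fun x hx => ?_)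
      ((g.toLinearEquiv.finrank_map_eq X).trans hrank)
    have hx' : g₀ x ∈ X' := hX hx
    rwa [← hg] at hx'
  exact ⟨g, map_eq hgL (h.finrank_lagrangian hB hB' hL hL'), map_eq hgW h.finrank_subspace⟩

end RelativePosition

section StandardForm

variable {n : ℕ}

/-- `omegaForm` as a bilinear form. -/
noncomputable def stdSymplecticForm (n : ℕ) : BilinForm ℝ (Fin n ⊕ Fin n → ℝ) :=
  Matrix.toBilin' (Jmat n)

lemma stdSymplecticForm_apply (u v : Fin n ⊕ Fin n → ℝ) :
    stdSymplecticForm n u v = omegaForm n u v :=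
  Matrix.toBilin'_apply' ..

lemma stdSymplecticForm_eq_sum (u v : Fin n ⊕ Fin n → ℝ) :
    stdSymplecticForm n u v = ∑ i, (u (.inl i) * v (.inr i) - u (.inr i) * v (.inl i)) := by
  rw [stdSymplecticForm_apply, omegaForm, Jmat, Matrix.fromBlocks_mulVec]
  simp [dotProduct, Fintype.sum_sum_type, Finset.sum_add_distrib, Matrix.neg_mulVec,
    sub_eq_add_neg]

lemma stdSymplecticForm_single_inl (i : Fin n) (v : Fin n ⊕ Fin n → ℝ) :
    stdSymplecticForm n (Pi.single (.inl i) 1) v = v (.inr i) := by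
  simp [stdSymplecticForm_eq_sum, Pi.single_apply]

lemma stdSymplecticForm_single_inr (i : Fin n) (v : Fin n ⊕ Fin n → ℝ) :
    stdSymplecticForm n (Pi.single (.inr i) 1) v = -v (.inl i) := by
  simp [stdSymplecticForm_eq_sum, Pi.single_apply]

lemma isSymplectic_stdSymplecticForm : IsSymplectic (stdSymplecticForm n) := by
  have hB : (stdSymplecticForm n).IsAlt := fun u => by
    simp [stdSymplecticForm_eq_sum, mul_comm]
  refine .of_isAlt hB fun u hu => funext ?_
  rintro (i | i)
  · have := hu (Pi.single (.inr i) 1)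
    rwa [← hB.neg_eq, stdSymplecticForm_single_inr, neg_neg] at this
  · have := hu (Pi.single (.inl i) 1)
    rwa [← hB.neg_eq, stdSymplecticForm_single_inl, neg_eq_zero] at this

lemma mem_Lsub {x : Fin n ⊕ Fin n → ℝ} : x ∈ Lsub n ↔ ∀ i, x (.inr i) = 0 := by
  have hbasis : (Set.range fun i : Fin n => Pi.single (.inl i) 1) =
      Pi.basisFun ℝ (Fin n ⊕ Fin n) '' Set.range .inl := by
    simp [← Set.range_comp, Function.comp_def]
  rw [Lsub, hbasis, Basis.mem_span_image]
  simp [Set.subset_def, Sum.forall]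

lemma isLagrangian_Lsub : IsLagrangian (stdSymplecticForm n) (Lsub n) := by
  ext x
  refine ⟨fun hx => mem_Lsub.2 fun i => ?_, fun hx y hy => ?_⟩
  · exact (stdSymplecticForm_single_inl i x).symm.trans (hx _ (Submodule.subset_span ⟨i, rfl⟩))
  · simp [stdSymplecticForm_eq_sum, mem_Lsub.1 hx, mem_Lsub.1 hy]

lemma sympPerp_eq_orthogonal (W : Submodule ℝ (Fin n ⊕ Fin n → ℝ)) :
    sympPerp n W = (stdSymplecticForm n).orthogonal W := by
  ext x
  rw [mem_orthogonal_iff_left isSymplectic_stdSymplecticForm.isAlt]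
  simp only [stdSymplecticForm_apply]
  rfl

variable {h : Matrix (Fin n ⊕ Fin n) (Fin n ⊕ Fin n) ℝ}

lemma transpose_mul_Jmat_mul_eq_iff :
    hᵀ * Jmat n * h = Jmat n ↔
      ∀ u v, stdSymplecticForm n (h *ᵥ u) (h *ᵥ v) = stdSymplecticForm n u v := by
  rw [← Matrix.toBilin'.injective.eq_iff, ← Matrix.toBilin'_comp, LinearMap.ext_iff₂]
  rfl

lemma toBlocks₂₁_eq_zero_iff : h.toBlocks₂₁ = 0 ↔ Lsub n ≤ (Lsub n).comap h.mulVecLin := by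
  nth_rw 1 [Lsub]
  rw [Submodule.span_le, Set.range_subset_iff, ← Matrix.ext_iff, forall_comm]
  simp [mem_Lsub, Matrix.toBlocks₂₁]

lemma exists_mem_siegelParabolic_iff {W W' : Submodule ℝ (Fin n ⊕ Fin n → ℝ)} :
    (∃ h : Matrix (Fin n ⊕ Fin n) (Fin n ⊕ Fin n) ℝ,
        hᵀ * Jmat n * h = Jmat n ∧ h.toBlocks₂₁ = 0 ∧ W.map h.mulVecLin = W') ↔
      ∃ g : (stdSymplecticForm n).IsometryEquiv (stdSymplecticForm n),
        (Lsub n).map g.toLinearEquiv.toLinearMap = Lsub n ∧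
          W.map g.toLinearEquiv.toLinearMap = W' := by
  constructor
  · rintro ⟨h, hJ, hP, hW⟩
    obtain ⟨g, hg⟩ := isSymplectic_stdSymplecticForm.exists_isometryEquiv_coe_eq
      ⟨h.mulVecLin, transpose_mul_Jmat_mul_eq_iff.1 hJ⟩ rfl
    have hg' : g.toLinearEquiv.toLinearMap = h.mulVecLin := LinearMap.ext (congrFun hg)
    refine ⟨g, Submodule.eq_of_le_of_finrank_eq ?_ (g.toLinearEquiv.finrank_map_eq _), hg' ▸ hW⟩
    rw [hg', Submodule.map_le_iff_le_comap]
    exact toBlocks₂₁_eq_zero_iff.1 hP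
  · rintro ⟨g, hL, hW⟩
    have hg : (LinearMap.toMatrix' g.toLinearEquiv.toLinearMap).mulVecLin =
        g.toLinearEquiv.toLinearMap := Matrix.toLin'_toMatrix' _
    refine ⟨LinearMap.toMatrix' g.toLinearEquiv.toLinearMap, ?_, ?_, by rwa [hg]⟩
    · refine transpose_mul_Jmat_mul_eq_iff.2 fun u v => ?_
      simp only [← Matrix.mulVecLin_apply, hg]
      exact g.map_app v u
    · rw [toBlocks₂₁_eq_zero_iff, hg, ← Submodule.map_le_iff_le_comap, hL]

end StandardForm

theorem siegel_parabolic_orbits_on_grassmannian (n : ℕ) (hn : 0 < n)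
    (W W' : Submodule ℝ (Fin n ⊕ Fin n → ℝ))
    (hW : Module.finrank ℝ W = n) (hW' : Module.finrank ℝ W' = n) :
    (∃ h : Matrix (Fin n ⊕ Fin n) (Fin n ⊕ Fin n) ℝ,
        hᵀ * Jmat n * h = Jmat n ∧ h.toBlocks₂₁ = 0 ∧
          W.map h.mulVecLin = W') ↔
      (Module.finrank ℝ ↥(Lsub n ⊓ W ⊓ sympPerp n W) =
          Module.finrank ℝ ↥(Lsub n ⊓ W' ⊓ sympPerp n W') ∧
        Module.finrank ℝ ↥(W ⊓ sympPerp n W) =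
          Module.finrank ℝ ↥(W' ⊓ sympPerp n W') ∧
        Module.finrank ℝ ↥(Lsub n ⊓ W) = Module.finrank ℝ ↥(Lsub n ⊓ W')) := by
  rw [exists_mem_siegelParabolic_iff, siegel_parabolic_orbits_on_grassmannian_general
    isSymplectic_stdSymplecticForm isSymplectic_stdSymplecticForm isLagrangian_Lsub
    isLagrangian_Lsub, sympPerp_eq_orthogonal, sympPerp_eq_orthogonal]
  exact ⟨fun h => ⟨h.finrank_inf_radical, h.finrank_radical, h.finrank_inf⟩,
    fun ⟨hinf_radical, hradical, hinf⟩ => ⟨rfl, hW.trans hW'.symm, hradical, hinf, hinf_radical⟩⟩
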